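/- f(k) > g_r(k) holds whenever one of the following is satisfied: (1) r = 2 and k ≥ 17; (2) r = 3 and k ≥ 5; (3) r = 4 and k ≥ 4; (4) r ≥ 5 (and k ≥ 3). -/

import Mathlib

open Finset

def HyperUniform {V : Type*} (k : ℕ) (H : Finset (Finset V)) : Prop := ∀ e ∈ H, e.card = k

def IsPM {V : Type*} [Fintype V] (H M : Finset (Finset V)) : Prop :=
  M ⊆ H ∧ (∀ e ∈ M, ∀ f ∈ M, e ≠ f → Disjoint e f) ∧ ∀ v : V, ∃ e ∈ M, v ∈ e

def hdeg {V : Type*} [DecidableEq V] (H : Finset (Finset V)) (v : V) : ℕ :=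
  (H.filter (fun e => v ∈ e)).card

def IsVec (k r : ℕ) (a : ℕ → ℕ) : Prop :=
  (∀ i j : ℕ, i ≤ j → j < r → a i ≤ a j) ∧ (∑ i ∈ Finset.range r, a i) = k - 1

noncomputable def gfun (k r : ℕ) (a : ℕ → ℕ) : ℝ :=
  (((k - 1).factorial : ℝ) / (∏ i ∈ Finset.range r, ((a i).factorial : ℝ))) *
    (∏ i ∈ Finset.range r, (((r * a i + 1 : ℕ) : ℝ) / ((r * k : ℕ) : ℝ)) ^ (a i)) *
    (1 + ((a 0 : ℝ) / ((r * a 0 + 1 : ℕ) : ℝ)) *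
      ∑ i ∈ Finset.Ico 1 r, ((r * a i + 1 : ℕ) : ℝ) / ((a i + 1 : ℕ) : ℝ))

noncomputable def gThr (k r : ℕ) : ℝ :=
  sSup {x : ℝ | ∃ a : ℕ → ℕ, IsVec k r a ∧ x = gfun k r a}

noncomputable def mThr (k n : ℕ) : ℕ :=
  sInf {m : ℕ | ∀ H : Finset (Finset (Fin n)), HyperUniform k H →
    (∀ v : Fin n, m ≤ hdeg H v) → ∃ M, IsPM H M}

noncomputable def fThr (k : ℕ) : ℝ :=
  Filter.limsup (fun n : ℕ => (mThr k n : ℝ) / ((n - 1).choose (k - 1) : ℝ))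
    (Filter.atTop ⊓ Filter.principal {n : ℕ | k ∣ n})

/-!
Give cell `i` the mass `a i + 1 / r`; the masses add up to `k`. For `a 0 = 0`, `g_r(a)` is the
probability that `k - 1` independent trials, with cell probabilities proportional to the masses,
have occupation vector `a`; for `a 0 > 0` it is the probability that the occupation vector is
`a - e_0 + e_i` for some `i`. Merging cells only increases such a probability, so it is enough to
bound the probability of one or two adjacent values of a binomial variable (`a 0 = 0` or `r = 2`),
or of three adjacent outcomes of a trinomial one (`r ≥ 3`). The successive ratios of the terms of a
binomial expansion give enough mass to the neighbouring terms to keep these probabilities below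
`1 - (1 - 1 / k) ^ (k - 1)`, unless `a` is concentrated in the last cell, where the bound is the
explicit `(1 - (1 - 1 / r) / k) ^ (k - 1)`. On the other hand `f(k) ≥ 1 - (1 - 1 / k) ^ (k - 1)`:
the `k`-sets meeting a fixed set of `n / k - 1` vertices contain no perfect matching.
-/

/-! ### Divided powers -/

/-- The divided power `x ^ n / n!`, so that the binomial theorem holds without coefficients
(`sum_antidiagonal_divPow`) and multinomial probabilities become products. -/
noncomputable def divPow (x : ℝ) (n : ℕ) : ℝ := x ^ n / (n.factorial : ℝ)

lemma divPow_zero_right (x : ℝ) : divPow x 0 = 1 := by simp [divPow]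

lemma divPow_succ (x : ℝ) (n : ℕ) : divPow x (n + 1) = divPow x n * (x / (n + 1)) := by
  rw [divPow, divPow, pow_succ, Nat.factorial_succ]
  push_cast
  field_simp

lemma divPow_nonneg {x : ℝ} (hx : 0 ≤ x) (n : ℕ) : 0 ≤ divPow x n := by
  unfold divPow; positivity

lemma divPow_pos {x : ℝ} (hx : 0 < x) (n : ℕ) : 0 < divPow x n := by
  unfold divPow; positivity

lemma divPow_div_divPow (x y : ℝ) (n : ℕ) : divPow x n / divPow y n = (x / y) ^ n := by
  rw [divPow, divPow, div_div_div_cancel_right₀ (by positivity), div_pow]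

lemma sum_antidiagonal_divPow (x y : ℝ) (n : ℕ) :
    ∑ ij ∈ antidiagonal n, divPow x ij.1 * divPow y ij.2 = divPow (x + y) n := by
  rw [divPow, (Commute.all x y).add_pow', Finset.sum_div]
  refine Finset.sum_congr rfl fun ij hij => ?_
  obtain ⟨i, j⟩ := ij
  obtain rfl : i + j = n := mem_antidiagonal.1 hij
  rw [nsmul_eq_mul, Nat.cast_add_choose, divPow, divPow]
  field_simp

lemma sum_window_divPow_le {x y : ℝ} (hx : 0 ≤ x) (hy : 0 ≤ y) (i j m : ℕ) :
    ∑ l ∈ range (m + 1), divPow x (i + l) * divPow y (j + (m - l)) ≤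
      divPow (x + y) (i + j + m) := by
  rw [← sum_antidiagonal_divPow]
  have hinj : Set.InjOn (fun l => (i + l, j + (m - l))) (range (m + 1) : Set ℕ) :=
    fun l _ l' _ h => Nat.add_left_cancel (congrArg Prod.fst h)
  rw [← Finset.sum_image (f := fun ij : ℕ × ℕ => divPow x ij.1 * divPow y ij.2) hinj]
  refine Finset.sum_le_sum_of_subset_of_nonneg ?_ fun _ _ _ =>
    mul_nonneg (divPow_nonneg hx _) (divPow_nonneg hy _)
  refine Finset.image_subset_iff.2 fun l hl => mem_antidiagonal.2 ?_
  have : l < m + 1 := Finset.mem_range.1 hl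
  dsimp only
  omega

lemma divPow_mul_le {x y : ℝ} (hx : 0 ≤ x) (hy : 0 ≤ y) (i j : ℕ) :
    divPow x i * divPow y j ≤ divPow (x + y) (i + j) := by
  simpa using sum_window_divPow_le hx hy i j 0

lemma divPow_two_terms_le {x y : ℝ} (hx : 0 ≤ x) (hy : 0 ≤ y) (i j : ℕ) :
    divPow x i * divPow y (j + 1) + divPow x (i + 1) * divPow y j ≤
      divPow (x + y) (i + j + 1) := by
  simpa [Finset.sum_range_succ] using sum_window_divPow_le hx hy i j 1

lemma divPow_three_terms_le {x y : ℝ} (hx : 0 ≤ x) (hy : 0 ≤ y) (i j : ℕ) :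
    divPow x i * divPow y (j + 2) + divPow x (i + 1) * divPow y (j + 1) +
      divPow x (i + 2) * divPow y j ≤ divPow (x + y) (i + j + 2) := by
  simpa [Finset.sum_range_succ] using sum_window_divPow_le hx hy i j 2

lemma divPow_four_terms_le {x y : ℝ} (hx : 0 ≤ x) (hy : 0 ≤ y) (i j : ℕ) :
    divPow x i * divPow y (j + 3) + divPow x (i + 1) * divPow y (j + 2) +
      divPow x (i + 2) * divPow y (j + 1) + divPow x (i + 3) * divPow y j ≤
        divPow (x + y) (i + j + 3) := by
  simpa [Finset.sum_range_succ] using sum_window_divPow_le hx hy i j 3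

lemma mul_divPow_mul_le_of_ratio {x y u : ℝ} (hx : 0 ≤ x) (hy : 0 ≤ y) {i j : ℕ}
    (h : u * (y * (i + 1)) ≤ x * (j + 1)) :
    u * (divPow x i * divPow y (j + 1)) ≤ divPow x (i + 1) * divPow y j := by
  have hratio : u * (y / (j + 1)) ≤ x / (i + 1) := by
    rw [← mul_div_assoc, div_le_div_iff₀ (by positivity) (by positivity), mul_assoc]
    exact h
  calc u * (divPow x i * divPow y (j + 1))
      = divPow x i * divPow y j * (u * (y / (j + 1))) := by rw [divPow_succ]; ring
    _ ≤ divPow x i * divPow y j * (x / (i + 1)) :=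
        mul_le_mul_of_nonneg_left hratio (mul_nonneg (divPow_nonneg hx i) (divPow_nonneg hy j))
    _ = divPow x (i + 1) * divPow y j := by rw [divPow_succ]; ring

lemma divPow_succ_sq_le {x : ℝ} (hx : 0 ≤ x) (n : ℕ) :
    divPow x (n + 1) ^ 2 ≤ 2 * (divPow x n * divPow x (n + 2)) := by
  have hsucc : divPow x (n + 1) = divPow x n * (x / (n + 1)) := divPow_succ x n
  have hsucc₂ : divPow x (n + 2) = divPow x (n + 1) * (x / (n + 2)) := by
    rw [divPow_succ x (n + 1)]; push_cast; ring
  have hratio : x / (n + 1) ≤ 2 * (x / (n + 2)) := by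
    rw [← mul_div_assoc, div_le_div_iff₀ (by positivity) (by positivity)]
    nlinarith [mul_nonneg hx (Nat.cast_nonneg (α := ℝ) n)]
  calc divPow x (n + 1) ^ 2 = divPow x n * divPow x (n + 1) * (x / (n + 1)) := by
        rw [sq]; nth_rw 1 [hsucc]; ring
    _ ≤ divPow x n * divPow x (n + 1) * (2 * (x / (n + 2))) :=
        mul_le_mul_of_nonneg_left hratio (mul_nonneg (divPow_nonneg hx n) (divPow_nonneg hx _))
    _ = 2 * (divPow x n * divPow x (n + 2)) := by rw [hsucc₂]; ring

-- By `divPow_succ_sq_le` and AM-GM, an interior term is at most the sum of its two neighbours.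
lemma two_mul_divPow_mul_le {x y : ℝ} (hx : 0 ≤ x) (hy : 0 ≤ y) (i j : ℕ) :
    2 * (divPow x (i + 1) * divPow y (j + 1)) ≤ divPow (x + y) (i + j + 2) := by
  have hL : 0 ≤ divPow x i * divPow y (j + 2) :=
    mul_nonneg (divPow_nonneg hx _) (divPow_nonneg hy _)
  have hR : 0 ≤ divPow x (i + 2) * divPow y j :=
    mul_nonneg (divPow_nonneg hx _) (divPow_nonneg hy _)
  have hsq : (divPow x (i + 1) * divPow y (j + 1)) ^ 2 ≤
      4 * ((divPow x i * divPow y (j + 2)) * (divPow x (i + 2) * divPow y j)) := by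
    calc (divPow x (i + 1) * divPow y (j + 1)) ^ 2
        = divPow x (i + 1) ^ 2 * divPow y (j + 1) ^ 2 := mul_pow _ _ _
      _ ≤ (2 * (divPow x i * divPow x (i + 2))) * (2 * (divPow y j * divPow y (j + 2))) :=
          mul_le_mul (divPow_succ_sq_le hx i) (divPow_succ_sq_le hy j) (sq_nonneg _)
            (mul_nonneg zero_le_two (mul_nonneg (divPow_nonneg hx _) (divPow_nonneg hx _)))
      _ = _ := by ring
  have hneighbours : divPow x (i + 1) * divPow y (j + 1) ≤
      divPow x i * divPow y (j + 2) + divPow x (i + 2) * divPow y j :=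
    le_of_sq_le_sq (hsq.trans ((mul_assoc _ _ _).symm.trans_le (four_mul_le_sq_add _ _)))
      (add_nonneg hL hR)
  linarith [divPow_three_terms_le hx hy i j]

lemma two_adjacent_le_of_three_terms {x y v : ℝ} (hx : 0 ≤ x) (hy : 0 ≤ y) (hv : 0 ≤ v)
    (i j : ℕ) (hlow : y * (i + 1) ≤ x * (j + 2)) (hhigh : v * (y * (i + 2)) ≤ x * (j + 1)) :
    (2 + v) * (divPow x i * divPow y (j + 2) + divPow x (i + 1) * divPow y (j + 1)) ≤
      2 * divPow (x + y) (i + j + 2) := by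
  have hB : divPow x i * divPow y (j + 2) ≤ divPow x (i + 1) * divPow y (j + 1) := by
    have := mul_divPow_mul_le_of_ratio (u := 1) (i := i) (j := j + 1) hx hy
      (by push_cast; linarith)
    rwa [one_mul] at this
  have hC : v * (divPow x (i + 1) * divPow y (j + 1)) ≤ divPow x (i + 2) * divPow y j :=
    mul_divPow_mul_le_of_ratio (i := i + 1) hx hy (by push_cast; linarith)
  have htotal := divPow_three_terms_le hx hy i j
  linarith [mul_le_mul_of_nonneg_left hB hv]

lemma two_adjacent_le_of_four_terms {x y u v w : ℝ} (hx : 0 ≤ x) (hy : 0 ≤ y) (hu : 0 ≤ u)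
    (hv : 0 ≤ v) (hw : 0 ≤ w) (i j : ℕ) (hlow : u * (y * (i + 1)) ≤ x * (j + 3))
    (hmid : v * (y * (i + 2)) ≤ x * (j + 2)) (hhigh : w * (y * (i + 3)) ≤ x * (j + 1)) :
    (1 + u + u * (v * (1 + w))) *
        (divPow x i * divPow y (j + 3) + divPow x (i + 1) * divPow y (j + 2)) ≤
      (1 + u) * divPow (x + y) (i + j + 3) := by
  have hB : u * (divPow x i * divPow y (j + 3)) ≤ divPow x (i + 1) * divPow y (j + 2) :=
    mul_divPow_mul_le_of_ratio (j := j + 2) hx hy (by push_cast; linarith)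
  have hC : v * (divPow x (i + 1) * divPow y (j + 2)) ≤ divPow x (i + 2) * divPow y (j + 1) :=
    mul_divPow_mul_le_of_ratio (i := i + 1) (j := j + 1) hx hy (by push_cast; linarith)
  have hD : w * (divPow x (i + 2) * divPow y (j + 1)) ≤ divPow x (i + 3) * divPow y j :=
    mul_divPow_mul_le_of_ratio (i := i + 2) hx hy (by push_cast; linarith)
  have htotal := divPow_four_terms_le hx hy i j
  set B := divPow x i * divPow y (j + 3)
  set A := divPow x (i + 1) * divPow y (j + 2)
  have hwindow : B + A + v * (1 + w) * A ≤ divPow (x + y) (i + j + 3) := by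
    linarith [mul_le_mul_of_nonneg_left hC (add_nonneg zero_le_one hw)]
  calc (1 + u + u * (v * (1 + w))) * (B + A)
      = (1 + u) * (B + A) + v * (1 + w) * (u * B + u * A) := by ring
    _ ≤ (1 + u) * (B + A) + v * (1 + w) * (A + u * A) := by gcongr
    _ = (1 + u) * (B + A + v * (1 + w) * A) := by ring
    _ ≤ (1 + u) * divPow (x + y) (i + j + 3) := by gcongr

/-! ### Merging the cells of a multinomial distribution -/

/-- The sum over `j ∈ s` of the multinomial weights `∏ i ∈ s, divPow (p i) (b' i)` with
`b' = b + Pi.single j 1`, written with the common factor taken out. -/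
noncomputable def raisedWeight {ι : Type*} (p : ι → ℝ) (b : ι → ℕ) (s : Finset ι) : ℝ :=
  (∏ i ∈ s, divPow (p i) (b i)) * ∑ i ∈ s, p i / (b i + 1)

section Merging

variable {ι : Type*} {p : ι → ℝ}

lemma raisedWeight_insert [DecidableEq ι] (p : ι → ℝ) (b : ι → ℕ) {s : Finset ι} {j : ι}
    (hj : j ∉ s) :
    raisedWeight p b (insert j s) = raisedWeight p b s * divPow (p j) (b j) +
      (∏ i ∈ s, divPow (p i) (b i)) * divPow (p j) (b j + 1) := by
  rw [raisedWeight, raisedWeight, Finset.prod_insert hj, Finset.sum_insert hj, divPow_succ]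
  ring

lemma prod_divPow_le (hp : ∀ i, 0 ≤ p i) (b : ι → ℕ) (s : Finset ι) :
    ∏ i ∈ s, divPow (p i) (b i) ≤ divPow (∑ i ∈ s, p i) (∑ i ∈ s, b i) := by
  classical
  induction s using Finset.induction_on with
  | empty => simp [divPow_zero_right]
  | insert j s hj ih =>
    rw [Finset.prod_insert hj, Finset.sum_insert hj, Finset.sum_insert hj]
    exact (mul_le_mul_of_nonneg_left ih (divPow_nonneg (hp j) _)).trans
      (divPow_mul_le (hp j) (Finset.sum_nonneg fun i _ => hp i) _ _)

lemma raisedWeight_le (hp : ∀ i, 0 ≤ p i) (b : ι → ℕ) (s : Finset ι) :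
    raisedWeight p b s ≤ divPow (∑ i ∈ s, p i) (∑ i ∈ s, b i + 1) := by
  classical
  induction s using Finset.induction_on with
  | empty => simp [raisedWeight, divPow]
  | insert j s hj ih =>
    rw [raisedWeight_insert p b hj, Finset.sum_insert hj, Finset.sum_insert hj,
      add_comm (p j), add_comm (b j) (∑ i ∈ s, b i)]
    calc raisedWeight p b s * divPow (p j) (b j) +
          (∏ i ∈ s, divPow (p i) (b i)) * divPow (p j) (b j + 1)
        ≤ divPow (∑ i ∈ s, p i) (∑ i ∈ s, b i + 1) * divPow (p j) (b j) +
          divPow (∑ i ∈ s, p i) (∑ i ∈ s, b i) * divPow (p j) (b j + 1) :=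
          add_le_add (mul_le_mul_of_nonneg_right ih (divPow_nonneg (hp j) _))
            (mul_le_mul_of_nonneg_right (prod_divPow_le hp b s) (divPow_nonneg (hp j) _))
      _ ≤ _ := by
          rw [add_comm]
          exact divPow_two_terms_le (Finset.sum_nonneg fun i _ => hp i) (hp j) _ _

lemma raisedWeight_range_add_two_le {p : ℕ → ℝ} (hp : ∀ i, 0 ≤ p i) (b : ℕ → ℕ) (n : ℕ) :
    raisedWeight p b (range (n + 2)) ≤
      (divPow (∑ i ∈ range n, p i) (∑ i ∈ range n, b i + 1) * divPow (p n) (b n) +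
          divPow (∑ i ∈ range n, p i) (∑ i ∈ range n, b i) * divPow (p n) (b n + 1)) *
        divPow (p (n + 1)) (b (n + 1)) +
      divPow (∑ i ∈ range n, p i) (∑ i ∈ range n, b i) * divPow (p n) (b n) *
        divPow (p (n + 1)) (b (n + 1) + 1) := by
  have hweight := raisedWeight_le hp b (range n)
  have hprod := prod_divPow_le hp b (range n)
  have hn (e : ℕ) := divPow_nonneg (hp n) e
  have hn' (e : ℕ) := divPow_nonneg (hp (n + 1)) e
  rw [Finset.range_add_one, raisedWeight_insert _ _ Finset.notMem_range_self,
    Finset.range_add_one, raisedWeight_insert _ _ Finset.notMem_range_self,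
    Finset.prod_insert Finset.notMem_range_self, mul_comm (divPow (p n) (b n))]
  gcongr
  all_goals first | exact hn _ | exact hn' _

end Merging

/-! ### Bounds for `gfun` -/

/-- The mass of the cell `i` in the multinomial reading of `g_r(a)`: the cell probability
`(r a_i + 1) / (r k)` times `k`, so that the masses add up to `k`. -/
noncomputable def cellMass (r : ℕ) (a : ℕ → ℕ) (i : ℕ) : ℝ := a i + 1 / r

lemma cellMass_nonneg (r : ℕ) (a : ℕ → ℕ) (i : ℕ) : 0 ≤ cellMass r a i := by
  unfold cellMass; positivity

lemma sum_range_cellMass (r : ℕ) (a : ℕ → ℕ) (m : ℕ) :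
    ∑ i ∈ range m, cellMass r a i = (∑ i ∈ range m, a i : ℕ) + m * (1 / r : ℝ) := by
  simp [cellMass, Finset.sum_add_distrib]

lemma IsVec.sum_cellMass {k r : ℕ} {a : ℕ → ℕ} (h : IsVec k r a) (hk : k ≠ 0) (hr : r ≠ 0) :
    ∑ i ∈ range r, cellMass r a i = k := by
  rw [sum_range_cellMass, h.2, Nat.cast_pred (Nat.pos_of_ne_zero hk)]
  field_simp
  ring

lemma IsVec.gfun_eq {k r : ℕ} {a : ℕ → ℕ} (h : IsVec k r a) (hr : r ≠ 0) :
    gfun k r a = (∏ i ∈ range r, divPow (cellMass r a i) (a i)) *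
      (1 + a 0 / cellMass r a 0 * ∑ i ∈ Ico 1 r, cellMass r a i / (a i + 1)) /
        divPow k (k - 1) := by
  have hr' : (r : ℝ) ≠ 0 := Nat.cast_ne_zero.2 hr
  have hmass (i : ℕ) : ((r * a i + 1 : ℕ) : ℝ) = r * cellMass r a i := by
    rw [cellMass]; push_cast; field_simp
  have hfactor : (a 0 : ℝ) / (r * cellMass r a 0) *
      ∑ i ∈ Ico 1 r, r * cellMass r a i / ((a i + 1 : ℕ) : ℝ) =
        a 0 / cellMass r a 0 * ∑ i ∈ Ico 1 r, cellMass r a i / (a i + 1) := by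
    simp only [mul_div_assoc, ← Finset.mul_sum, Nat.cast_add, Nat.cast_one]
    field_simp
  have hprob : ∏ i ∈ range r, (r * cellMass r a i / ((r * k : ℕ) : ℝ)) ^ a i =
      (∏ i ∈ range r, cellMass r a i ^ a i) / (k : ℝ) ^ (k - 1) := by
    simp only [Nat.cast_mul, mul_div_mul_left _ _ hr', div_pow, Finset.prod_div_distrib,
      Finset.prod_pow_eq_pow_sum, h.2]
  simp only [gfun, hmass, hfactor, hprob, divPow, Finset.prod_div_distrib]
  field_simp

lemma IsVec.gfun_eq_of_zero {k r : ℕ} {a : ℕ → ℕ} (h : IsVec k r a) (hr : r ≠ 0)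
    (h0 : a 0 = 0) :
    gfun k r a = (∏ i ∈ range r, divPow (cellMass r a i) (a i)) / divPow k (k - 1) := by
  rw [h.gfun_eq hr, h0]
  simp

lemma IsVec.gfun_eq_raisedWeight {k r : ℕ} {b : ℕ → ℕ} (h : IsVec k r (b + Pi.single 0 1))
    (hr : r ≠ 0) :
    gfun k r (b + Pi.single 0 1) =
      raisedWeight (cellMass r (b + Pi.single 0 1)) b (range r) / divPow k (k - 1) := by
  obtain ⟨m, rfl⟩ := Nat.exists_eq_succ_of_ne_zero hr
  have hzero : (b + Pi.single 0 1 : ℕ → ℕ) 0 = b 0 + 1 := by simp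
  have hsucc (i : ℕ) : (b + Pi.single 0 1 : ℕ → ℕ) (i + 1) = b (i + 1) := by simp
  have hmass : cellMass m.succ (b + Pi.single 0 1) 0 ≠ 0 := by
    rw [cellMass, hzero]; positivity
  rw [h.gfun_eq hr, raisedWeight, Finset.sum_Ico_eq_sum_range, Nat.succ_eq_add_one,
    Nat.add_sub_cancel]
  simp only [Finset.prod_range_succ', Finset.sum_range_succ', hzero, hsucc, divPow_succ,
    add_comm 1, Nat.cast_add, Nat.cast_one]
  congr 1
  field_simp
  ring

lemma IsVec.gfun_le_of_zero {k r : ℕ} {a : ℕ → ℕ} (h : IsVec k r a) (hk : k ≠ 0) (hr : r ≠ 0)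
    (h0 : a 0 = 0) :
    gfun k r a ≤ max (1 / 2) ((1 - (1 - 1 / (r : ℝ)) / k) ^ (k - 1)) := by
  have hk₀ : (0 : ℝ) < k := by positivity
  have hmass : ∑ i ∈ range r, cellMass r a i = k := h.sum_cellMass hk hr
  have hsum : ∑ i ∈ range r, a i = k - 1 := h.2
  have hprod := prod_divPow_le (cellMass_nonneg r a) a (range (r - 1))
  obtain ⟨m, rfl⟩ := Nat.exists_eq_succ_of_ne_zero hr
  rw [h.gfun_eq_of_zero hr h0, Finset.prod_range_succ]
  rw [Finset.sum_range_succ] at hmass hsum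
  rw [Nat.succ_eq_add_one, Nat.add_sub_cancel] at hprod
  set P := ∑ i ∈ range m, cellMass (m + 1) a i
  have hP : 0 ≤ P := Finset.sum_nonneg fun i _ => cellMass_nonneg (m + 1) a i
  have hz : 0 ≤ cellMass (m + 1) a m := cellMass_nonneg _ _ _
  have hmerged := mul_le_mul_of_nonneg_right hprod (divPow_nonneg hz (a m))
  rcases Nat.eq_zero_or_pos (∑ i ∈ range m, a i) with hA | hA
  · refine le_max_of_le_right ?_
    have ham : a m = k - 1 := by omega
    have hbase : cellMass (m + 1) a m / k = 1 - (1 - 1 / ((m + 1 : ℕ) : ℝ)) / k := by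
      rw [cellMass, ham, Nat.cast_pred (Nat.pos_of_ne_zero hk)]
      field_simp
      ring
    rw [hA, divPow_zero_right, one_mul, ham] at hmerged
    rw [← hbase, ← divPow_div_divPow, ham]
    exact div_le_div_of_nonneg_right hmerged (divPow_nonneg hk₀.le _)
  · refine le_max_of_le_left ((div_le_iff₀ (divPow_pos hk₀ _)).2 (hmerged.trans ?_))
    have ham : 0 < a m := by
      obtain ⟨i, hi, hai⟩ := Finset.sum_pos_iff.1 hA
      exact hai.trans_le (h.1 i m (Finset.mem_range.1 hi).le m.lt_succ_self)
    obtain ⟨A, hA'⟩ := Nat.exists_eq_succ_of_ne_zero hA.ne'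
    obtain ⟨f, hf⟩ := Nat.exists_eq_succ_of_ne_zero ham.ne'
    have hhalf := two_mul_divPow_mul_le hP hz A f
    rw [hmass, show A + f + 2 = k - 1 by omega] at hhalf
    rw [hA', hf]
    linarith

lemma binomial_adjacent_le {c d : ℕ} (hcd : c + 1 ≤ d) (hsum : 16 ≤ c + 1 + d) :
    divPow (c + 3 / 2) (c + 1) * divPow (d + 1 / 2) d +
        divPow (c + 3 / 2) c * divPow (d + 1 / 2) (d + 1) ≤
      0.62 * divPow (c + d + 2) (c + d + 1) := by
  obtain ⟨j, rfl⟩ : ∃ j, d = j + 2 := ⟨d - 2, by omega⟩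
  have hx : (0 : ℝ) ≤ c + 3 / 2 := by positivity
  have hy : (0 : ℝ) ≤ (j + 2 : ℕ) + 1 / 2 := by positivity
  have htotal : (0 : ℝ) ≤ divPow (c + (j + 2 : ℕ) + 2) (c + (j + 2) + 1) :=
    divPow_nonneg (by positivity) _
  have hadd : (c + 3 / 2 + ((j + 2 : ℕ) + 1 / 2) : ℝ) = c + (j + 2 : ℕ) + 2 := by ring
  rcases c with _ | c
  · simp only [Nat.cast_zero] at hx hadd htotal ⊢
    have hj : (13 : ℝ) ≤ j := by exact_mod_cast show 13 ≤ j by omega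
    have hpair := two_adjacent_le_of_four_terms (u := 3 / 2) (v := 0.725) (w := 0.45) hx hy
      (by norm_num) (by norm_num) (by norm_num) 0 j
      (by push_cast; linarith) (by push_cast; linarith) (by push_cast; linarith)
    rw [hadd] at hpair
    rw [show 0 + (j + 2) + 1 = 0 + j + 3 by ring] at htotal ⊢
    linarith
  · have hcj : (12 : ℝ) ≤ c + j := by exact_mod_cast show 12 ≤ c + j by omega
    have hmul : 6 * (c : ℝ) ≤ c * j := by
      have : (6 : ℝ) ≤ j := by exact_mod_cast show 6 ≤ j by omega
      nlinarith [Nat.cast_nonneg (α := ℝ) c]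
    have hpair := two_adjacent_le_of_four_terms (u := 1) (v := 0.8) (w := 0.55) hx hy
      (by norm_num) (by norm_num) (by norm_num) (c + 1) j
      (by push_cast; linarith) (by push_cast; linarith) (by push_cast; linarith)
    rw [hadd] at hpair
    rw [show c + 1 + (j + 2) + 1 = c + 1 + j + 3 by ring] at htotal ⊢
    linarith

-- The first cell stands for all but the last two cells of an `r`-cell vector, and `ρ = 1 / r`.
-- Among the vectors `a` with `a 0 > 0`, only `(1, 1, 1)`, where `k = 4`, violates `hedge`.
lemma trinomial_raised_le {T d f : ℕ} {ρ : ℝ} (hρ₀ : 0 ≤ ρ) (hρ : ρ ≤ 1 / 3)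
    (hedge : 1 ≤ f ∨ (1 ≤ T ∧ ρ ≤ 1 / 4)) :
    (divPow (T + 2 - 2 * ρ) (T + 1) * divPow (d + 1 + ρ) (d + 1) +
        divPow (T + 2 - 2 * ρ) T * divPow (d + 1 + ρ) (d + 2)) * divPow (f + 1 + ρ) (f + 1) +
      divPow (T + 2 - 2 * ρ) T * divPow (d + 1 + ρ) (d + 1) * divPow (f + 1 + ρ) (f + 2) ≤
        0.582 * divPow (T + d + f + 4) (T + d + f + 3) := by
  have hT₀ : (0 : ℝ) ≤ T := T.cast_nonneg
  have hd₀ : (0 : ℝ) ≤ d := d.cast_nonneg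
  have hx : 0 ≤ T + 2 - 2 * ρ := by linarith
  have hy : 0 ≤ d + 1 + ρ := by linarith
  have hz : 0 ≤ f + 1 + ρ := by linarith
  have hTd := mul_nonneg hT₀ hd₀
  have hfirst := two_adjacent_le_of_three_terms (v := 1 / 2) hx hy (by norm_num) T d
    (by nlinarith) (by nlinarith)
  have hfirst' : 1.25 * (divPow (T + 2 - 2 * ρ) T * divPow (d + 1 + ρ) (d + 1)) ≤
      divPow (T + 2 - 2 * ρ + (d + 1 + ρ)) (T + d + 1) := by
    have hratio := mul_divPow_mul_le_of_ratio (u := 1 / 4) (i := T) (j := d) hx hy (by nlinarith)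
    linarith [divPow_two_terms_le hx hy T d]
  have hratio : 3 / 4 * ((f + 1 + ρ) * (T + d + 3)) ≤ (T + d + 3 - ρ) * (f + 1) := by
    rcases hedge with hf | ⟨hT, hρ⟩
    · have hf : (1 : ℝ) ≤ f := by exact_mod_cast hf
      nlinarith
    · have hT : (1 : ℝ) ≤ T := by exact_mod_cast hT
      nlinarith
  have hxy : T + 2 - 2 * ρ + (d + 1 + ρ) = T + d + 3 - ρ := by ring
  rw [hxy] at hfirst hfirst'
  have hsecond := two_adjacent_le_of_three_terms (v := 3 / 4) (by linarith : 0 ≤ T + d + 3 - ρ) hz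
    (by norm_num) (T + d + 1) f (by push_cast; nlinarith) (by push_cast; linarith)
  have hQ : T + d + 3 - ρ + (f + 1 + ρ) = T + d + f + 4 := by ring
  rw [hQ, show T + d + 1 + f + 2 = T + d + f + 3 by ring] at hsecond
  have hleft := mul_le_mul_of_nonneg_right hfirst (divPow_nonneg hz (f + 1))
  have hright := mul_le_mul_of_nonneg_right hfirst' (divPow_nonneg hz (f + 2))
  have htotal : 0 ≤ divPow (T + d + f + 4) (T + d + f + 3) := divPow_nonneg (by positivity) _
  linarith

lemma exists_eq_add_single_of_pos {a : ℕ → ℕ} (h0 : 1 ≤ a 0) :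
    ∃ b : ℕ → ℕ, a = b + Pi.single 0 1 := by
  refine ⟨a - Pi.single 0 1, (tsub_add_cancel_of_le fun i => ?_).symm⟩
  rcases i with _ | i <;> simp [h0]

lemma IsVec.gfun_le_of_pos_of_two {k : ℕ} {a : ℕ → ℕ} (h : IsVec k 2 a) (hk : 17 ≤ k)
    (h0 : 1 ≤ a 0) : gfun k 2 a ≤ 0.62 := by
  obtain ⟨b, rfl⟩ := exists_eq_add_single_of_pos h0
  have hsum := h.2
  have hle := h.1 0 1 (by norm_num) (by norm_num)
  rw [h.gfun_eq_raisedWeight two_ne_zero, div_le_iff₀ (divPow_pos (by positivity) _)]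
  simp only [Finset.sum_range_succ, Finset.range_zero, Finset.sum_empty, Pi.add_apply,
    Pi.single_eq_same, ne_eq, one_ne_zero, not_false_eq_true, Pi.single_eq_of_ne] at hsum hle
  have hbound := binomial_adjacent_le (c := b 0) (d := b 1) (by omega) (by omega)
  have hkb : k = b 0 + b 1 + 2 := by omega
  have hmass₀ : cellMass 2 (b + Pi.single 0 1) 0 = b 0 + 3 / 2 := by
    norm_num [cellMass, add_assoc]
  have hmass₁ : cellMass 2 (b + Pi.single 0 1) 1 = b 1 + 1 / 2 := by simp [cellMass]
  rw [Finset.range_add_one, raisedWeight_insert _ _ Finset.notMem_range_self]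
  simp only [Finset.range_one, raisedWeight, Finset.prod_singleton, Finset.sum_singleton,
    ← divPow_succ, hmass₀, hmass₁, hkb]
  push_cast
  exact hbound

lemma sum_range_add_single (b : ℕ → ℕ) (m : ℕ) :
    ∑ i ∈ range (m + 1), (b + Pi.single 0 1 : ℕ → ℕ) i = ∑ i ∈ range (m + 1), b i + 1 := by
  simp [Finset.sum_add_distrib]

lemma sum_range_cellMass_add_single (b : ℕ → ℕ) (m : ℕ) :
    ∑ i ∈ range (m + 1), cellMass (m + 3) (b + Pi.single 0 1) i =
      (∑ i ∈ range (m + 1), b i : ℕ) + 2 - 2 * (1 / (m + 3 : ℕ) : ℝ) := by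
  rw [sum_range_cellMass, sum_range_add_single]
  push_cast
  field_simp
  ring

lemma IsVec.exists_last_two {k m : ℕ} {b : ℕ → ℕ} (h : IsVec k (m + 3) (b + Pi.single 0 1))
    (hk : 5 ≤ k) :
    ∃ d f, b (m + 1) = d + 1 ∧ b (m + 2) = f + 1 ∧ ∑ i ∈ range (m + 1), b i + d + f + 4 = k ∧
      (1 ≤ f ∨ (1 ≤ ∑ i ∈ range (m + 1), b i ∧ 1 ≤ m)) := by
  have hshift (i : ℕ) : (b + Pi.single 0 1 : ℕ → ℕ) (i + 1) = b (i + 1) := by simp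
  have hpos (i : ℕ) (hi : i < m + 2) : ∃ e, b (i + 1) = e + 1 := by
    have hle := h.1 0 (i + 1) (by omega) (by omega)
    rw [hshift, Pi.add_apply, Pi.single_eq_same] at hle
    exact Nat.exists_eq_succ_of_ne_zero (by omega)
  obtain ⟨d, hd⟩ := hpos m (by omega)
  obtain ⟨f, hf⟩ := hpos (m + 1) (by omega)
  have hsum := h.2
  rw [Finset.sum_range_succ, Finset.sum_range_succ, sum_range_add_single, hshift, hshift, hd,
    hf] at hsum
  refine ⟨d, f, hd, hf, by omega, ?_⟩
  rcases m with _ | m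
  · have h01 := h.1 0 1 (by norm_num) (by norm_num)
    have h12 := h.1 1 2 (by norm_num) (by norm_num)
    simp only [zero_add, Finset.range_one, Finset.sum_singleton] at hsum hd hf
    rw [hshift, hd, Pi.add_apply, Pi.single_eq_same] at h01
    rw [hshift, hshift, hd, hf] at h12
    exact Or.inl (by omega)
  · obtain ⟨e, he⟩ := hpos 0 (by omega)
    refine Or.inr ⟨?_, Nat.succ_pos m⟩
    calc 1 ≤ b 1 := by rw [he]; exact Nat.le_add_left 1 e
      _ ≤ ∑ i ∈ range (m + 2), b i := Finset.single_le_sum_of_canonicallyOrdered (by simp)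

lemma IsVec.gfun_le_of_pos_of_three_le {k r : ℕ} {a : ℕ → ℕ} (h : IsVec k r a) (hk : 5 ≤ k)
    (hr : 3 ≤ r) (h0 : 1 ≤ a 0) : gfun k r a ≤ 0.582 := by
  obtain ⟨b, rfl⟩ := exists_eq_add_single_of_pos h0
  obtain ⟨m, rfl⟩ := Nat.exists_eq_add_of_le' hr
  obtain ⟨d, f, hd, hf, hsum, hedge⟩ := h.exists_last_two hk
  set p := cellMass (m + 3) (b + Pi.single 0 1) with hp
  set T := ∑ i ∈ range (m + 1), b i with hT
  set ρ : ℝ := 1 / (m + 3 : ℕ) with hρ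
  have hmass₁ : p (m + 1) = d + 1 + ρ := by simp [hp, cellMass, hd, hρ]
  have hmass₂ : p (m + 2) = f + 1 + ρ := by simp [hp, cellMass, hf, hρ]
  have hρ₃ : ρ ≤ 1 / 3 := one_div_le_one_div_of_le (by norm_num) (by simp)
  have hρ₄ (hm : 1 ≤ m) : ρ ≤ 1 / 4 :=
    one_div_le_one_div_of_le (by norm_num) (by exact_mod_cast Nat.add_le_add_right hm 3)
  rw [h.gfun_eq_raisedWeight (by omega), div_le_iff₀ (divPow_pos (by positivity) _)]
  refine (raisedWeight_range_add_two_le (cellMass_nonneg _ _) b (m + 1)).trans ?_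
  rw [sum_range_cellMass_add_single, ← hp, ← hT, ← hρ, hmass₁, hmass₂, hd, hf, ← hsum]
  push_cast
  exact trinomial_raised_le (by positivity) hρ₃ (hedge.imp_right (And.imp_right hρ₄))

/-! ### The threshold value -/

lemma antitone_one_sub_div_pow {c : ℝ} (hc₀ : 0 ≤ c) (hc : c ≤ 1) :
    Antitone fun k : ℕ => (1 - c / k) ^ (k - 1) := by
  refine antitone_nat_of_succ_le fun k => ?_
  rcases k with _ | j
  · simp
  set w : ℝ := 1 - c / (j + 1 + 1 : ℕ) with hw
  set u : ℝ := 1 - c / (j + 1 : ℕ) with hu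
  have hw_pos : 0 < w := by
    rw [hw, sub_pos, div_lt_one (by positivity)]; push_cast; linarith [j.cast_nonneg (α := ℝ)]
  have hu_nonneg : 0 ≤ u := by
    rw [hu, sub_nonneg, div_le_one (by positivity)]; push_cast; linarith [j.cast_nonneg (α := ℝ)]
  have hstep : j * (w - u) ≤ w * (1 - w) := by
    have hdiff : w * (1 - w) - j * (w - u) =
        c * ((1 - c) * (j + 1) + 1) / ((j + 1) * (j + 2) ^ 2) := by
      rw [hw, hu]; push_cast; field_simp; ring
    rw [← sub_nonneg, hdiff]
    have := sub_nonneg.2 hc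
    positivity
  have hbernoulli : 1 + j * (u / w - 1) ≤ (u / w) ^ j :=
    one_add_mul_sub_le_pow (by linarith [div_nonneg hu_nonneg hw_pos.le]) j
  have hratio : w ≤ 1 + j * (u / w - 1) := by
    have : j * (1 - u / w) ≤ 1 - w := by
      rw [← mul_le_mul_iff_right₀ hw_pos]
      calc w * (j * (1 - u / w)) = j * (w - u) := by field_simp
        _ ≤ w * (1 - w) := hstep
    linarith
  calc w ^ (j + 1) = w * w ^ j := pow_succ' w j
    _ ≤ (u / w) ^ j * w ^ j := by gcongr; exact hratio.trans hbernoulli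
    _ = u ^ j := by rw [← mul_pow, div_mul_cancel₀ _ hw_pos.ne']

/-- The limiting relative minimum degree of the space barrier (`spaceBarrier`) whose core is one
vertex short of a `1 / k` fraction of all vertices. -/
noncomputable def spaceBarrierDensity (k : ℕ) : ℝ := 1 - (1 - 1 / (k : ℝ)) ^ (k - 1)

lemma monotone_spaceBarrierDensity : Monotone spaceBarrierDensity :=
  fun _ _ hk => sub_le_sub_left (antitone_one_sub_div_pow zero_le_one le_rfl hk) 1

lemma five_div_nine_le_spaceBarrierDensity {k : ℕ} (hk : 3 ≤ k) :
    5 / 9 ≤ spaceBarrierDensity k :=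
  (by norm_num [spaceBarrierDensity] : 5 / 9 ≤ spaceBarrierDensity 3).trans
    (monotone_spaceBarrierDensity hk)

lemma one_sub_div_pow_lt_spaceBarrierDensity {c : ℝ} (hc₀ : 0 ≤ c) (hc : c ≤ 1) {k₀ k : ℕ}
    (hk : k₀ ≤ k) (h : (1 - c / k₀) ^ (k₀ - 1) < spaceBarrierDensity k₀) :
    (1 - c / k) ^ (k - 1) < spaceBarrierDensity k :=
  (antitone_one_sub_div_pow hc₀ hc hk).trans_lt (h.trans_le (monotone_spaceBarrierDensity hk))

lemma lastCell_bound_lt_spaceBarrierDensity {k r : ℕ}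
    (h : (r = 2 ∧ 17 ≤ k) ∨ (r = 3 ∧ 5 ≤ k) ∨ (r = 4 ∧ 4 ≤ k) ∨ (5 ≤ r ∧ 3 ≤ k)) :
    (1 - (1 - 1 / (r : ℝ)) / k) ^ (k - 1) < spaceBarrierDensity k := by
  rcases h with ⟨rfl, hk⟩ | ⟨rfl, hk⟩ | ⟨rfl, hk⟩ | ⟨hr, hk⟩
  · exact one_sub_div_pow_lt_spaceBarrierDensity (by norm_num) (by norm_num) hk
      (by norm_num [spaceBarrierDensity])
  · exact one_sub_div_pow_lt_spaceBarrierDensity (by norm_num) (by norm_num) hk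
      (by norm_num [spaceBarrierDensity])
  · exact one_sub_div_pow_lt_spaceBarrierDensity (by norm_num) (by norm_num) hk
      (by norm_num [spaceBarrierDensity])
  · have hr' : (1 : ℝ) / r ≤ 1 / 5 := by gcongr; exact_mod_cast hr
    have hr₀ : (0 : ℝ) ≤ 1 / r := by positivity
    refine one_sub_div_pow_lt_spaceBarrierDensity (by linarith) (by linarith) hk ?_
    calc (1 - (1 - 1 / (r : ℝ)) / (3 : ℕ)) ^ (3 - 1) ≤ (11 / 15) ^ 2 :=
          pow_le_pow_left₀ (by push_cast; linarith) (by push_cast; linarith) 2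
      _ < spaceBarrierDensity 3 := by norm_num [spaceBarrierDensity]

lemma IsVec.lt_of_pos {k r : ℕ} {a : ℕ → ℕ} (h : IsVec k r a) (hk : k ≠ 0) (h0 : 1 ≤ a 0) :
    r < k := by
  have hcard := Finset.card_nsmul_le_sum (range r) a 1 fun i hi =>
    h0.trans (h.1 0 i i.zero_le (Finset.mem_range.1 hi))
  rw [Finset.card_range, h.2, smul_eq_mul] at hcard
  omega

lemma exists_gfun_le_lt_spaceBarrierDensity {k r : ℕ} (hk : 3 ≤ k)
    (h : (r = 2 ∧ 17 ≤ k) ∨ (3 ≤ r ∧ 5 ≤ k) ∨ k ≤ r) :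
    ∃ B < spaceBarrierDensity k, ∀ a, IsVec k r a → 1 ≤ a 0 → gfun k r a ≤ B := by
  rcases h with ⟨rfl, hk⟩ | ⟨hr, hk⟩ | hkr
  · refine ⟨0.62, ?_, fun a ha h0 => ha.gfun_le_of_pos_of_two hk h0⟩
    exact (by norm_num [spaceBarrierDensity] : 0.62 < spaceBarrierDensity 17).trans_le
      (monotone_spaceBarrierDensity hk)
  · refine ⟨0.582, ?_, fun a ha h0 => ha.gfun_le_of_pos_of_three_le hk hr h0⟩
    exact (by norm_num [spaceBarrierDensity] : 0.582 < spaceBarrierDensity 5).trans_le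
      (monotone_spaceBarrierDensity hk)
  · exact ⟨1 / 2, by linarith [five_div_nine_le_spaceBarrierDensity hk],
      fun a ha h0 => absurd (ha.lt_of_pos (by omega) h0) hkr.not_gt⟩

lemma gThr_le {k r : ℕ} (hk : k ≠ 0) (hr : r ≠ 0) {B : ℝ}
    (hpos : ∀ a, IsVec k r a → 1 ≤ a 0 → gfun k r a ≤ B) :
    gThr k r ≤ max (max (1 / 2) ((1 - (1 - 1 / (r : ℝ)) / k) ^ (k - 1))) B := by
  refine Real.sSup_le ?_ (le_max_of_le_left (le_max_of_le_left (by norm_num)))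
  rintro _ ⟨a, ha, rfl⟩
  rcases Nat.eq_zero_or_pos (a 0) with h0 | h0
  · exact le_max_of_le_left (ha.gfun_le_of_zero hk hr h0)
  · exact le_max_of_le_right (hpos a ha h0)

/-! ### The space barrier -/

lemma card_filter_mem_powersetCard {α : Type*} [DecidableEq α] {s : Finset α} {a : α} (ha : a ∈ s)
    {k : ℕ} (hk : k ≠ 0) : #{e ∈ powersetCard k s | a ∈ e} = (#s - 1).choose (k - 1) := by
  have hnot : {e ∈ powersetCard k s | a ∉ e} = powersetCard k (s.erase a) := by
    ext e
    simp only [Finset.mem_filter, Finset.mem_powersetCard, Finset.subset_erase]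
    tauto
  have hsplit := Finset.card_filter_add_card_filter_not (s := powersetCard k s) (a ∈ ·)
  rw [hnot, Finset.card_powersetCard, Finset.card_powersetCard, Finset.card_erase_of_mem ha,
    Nat.choose_eq_choose_pred_add (Finset.card_pos.2 ⟨a, ha⟩) (Nat.pos_of_ne_zero hk)] at hsplit
  exact Nat.add_right_cancel hsplit

section Hypergraph

variable {V : Type*} [Fintype V]

lemma IsPM.card_le_mul {H M : Finset (Finset V)} {k : ℕ} (hM : IsPM H M)
    (hH : HyperUniform k H) : Fintype.card V ≤ #M * k := by
  classical
  have hcover : (univ : Finset V) ⊆ M.biUnion id := fun v _ => by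
    simpa using hM.2.2 v
  exact (Finset.card_le_card hcover).trans
    (Finset.card_biUnion_le_card_mul M id k fun e he => (hH e (hM.1 he)).le)

lemma IsPM.card_le_of_not_disjoint {H M : Finset (Finset V)} {A : Finset V} (hM : IsPM H M)
    (hA : ∀ e ∈ H, ¬Disjoint e A) : #M ≤ #A := by
  refine Finset.card_le_card_of_forall_subsingleton (fun e v => v ∈ e) (fun e he => ?_)
    fun v _ e he f hf => ?_
  · obtain ⟨v, hve, hvA⟩ := Finset.not_disjoint_iff.1 (hA e (hM.1 he))
    exact ⟨v, hvA, hve⟩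
  · by_contra hef
    exact Finset.disjoint_left.1 (hM.2.1 e he.1 f hf.1 hef) he.2 hf.2

variable [DecidableEq V]

/-- The space barrier with core `A`: all `k`-sets that meet `A`. Disjoint edges use distinct
vertices of `A`, so a small core rules out a perfect matching. -/
def spaceBarrier (k : ℕ) (A : Finset V) : Finset (Finset V) :=
  {e ∈ powersetCard k univ | ¬Disjoint e A}

lemma hyperUniform_spaceBarrier (k : ℕ) (A : Finset V) : HyperUniform k (spaceBarrier k A) :=
  fun _ he => (Finset.mem_powersetCard.1 (Finset.mem_filter.1 he).1).2

lemma not_isPM_spaceBarrier {k : ℕ} {A : Finset V} (hA : #A * k < Fintype.card V)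
    (M : Finset (Finset V)) : ¬IsPM (spaceBarrier k A) M := fun hM =>
  hA.not_ge <| (hM.card_le_mul (hyperUniform_spaceBarrier k A)).trans <|
    Nat.mul_le_mul_right k (hM.card_le_of_not_disjoint fun _ he => (Finset.mem_filter.1 he).2)

lemma choose_le_hdeg_spaceBarrier_add {k : ℕ} (hk : k ≠ 0) (A : Finset V) (v : V) :
    (Fintype.card V - 1).choose (k - 1) ≤
      hdeg (spaceBarrier k A) v + (Fintype.card V - #A - 1).choose (k - 1) := by
  have hmissing : #{e ∈ powersetCard k univ | v ∈ e ∧ Disjoint e A} ≤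
      (Fintype.card V - #A - 1).choose (k - 1) := by
    by_cases hv : v ∈ A
    · rw [Finset.filter_false_of_mem fun e _ he => Finset.disjoint_left.1 he.2 he.1 hv,
        Finset.card_empty]
      exact Nat.zero_le _
    · rw [← Finset.card_compl, ← card_filter_mem_powersetCard (Finset.mem_compl.2 hv) hk]
      refine Finset.card_le_card fun e he => ?_
      simp only [Finset.mem_filter, Finset.mem_powersetCard] at he ⊢
      exact ⟨⟨Finset.subset_compl_iff_disjoint_right.2 he.2.2, he.1.2⟩, he.2.1⟩
  have hsplit := Finset.card_filter_add_card_filter_not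
    (s := {e ∈ powersetCard k (univ : Finset V) | v ∈ e}) (Disjoint · A)
  rw [card_filter_mem_powersetCard (Finset.mem_univ v) hk, Finset.card_univ,
    Finset.filter_filter] at hsplit
  have hdeg_eq : hdeg (spaceBarrier k A) v =
      #{e ∈ {e ∈ powersetCard k (univ : Finset V) | v ∈ e} | ¬Disjoint e A} := by
    rw [hdeg, spaceBarrier, Finset.filter_comm]
  omega

lemma HyperUniform.hdeg_le {H : Finset (Finset V)} {k : ℕ} (hH : HyperUniform k H) (hk : k ≠ 0)
    (v : V) : hdeg H v ≤ (Fintype.card V - 1).choose (k - 1) := by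
  rw [← Finset.card_univ, ← card_filter_mem_powersetCard (Finset.mem_univ v) hk]
  exact Finset.card_le_card (Finset.filter_subset_filter _ fun e he =>
    Finset.mem_powersetCard.2 ⟨Finset.subset_univ e, hH e he⟩)

end Hypergraph

section Threshold

variable {k n : ℕ}

lemma succ_choose_mem_sufficientDegrees (hk : k ≠ 0) (hn : n ≠ 0) :
    (n - 1).choose (k - 1) + 1 ∈ {m | ∀ H : Finset (Finset (Fin n)), HyperUniform k H →
      (∀ v : Fin n, m ≤ hdeg H v) → ∃ M, IsPM H M} := by
  intro H hH hdeg_lt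
  have hle := hH.hdeg_le hk ⟨0, Nat.pos_of_ne_zero hn⟩
  rw [Fintype.card_fin] at hle
  exact absurd (hdeg_lt _) hle.not_gt

lemma mThr_le (hk : k ≠ 0) (hn : n ≠ 0) : mThr k n ≤ (n - 1).choose (k - 1) + 1 :=
  Nat.sInf_le (succ_choose_mem_sufficientDegrees hk hn)

lemma lt_mThr (hk : k ≠ 0) (hn : n ≠ 0) {H : Finset (Finset (Fin n))} (hH : HyperUniform k H)
    (hPM : ∀ M, ¬IsPM H M) {m : ℕ} (hm : ∀ v, m ≤ hdeg H v) : m < mThr k n := by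
  by_contra! hle
  obtain ⟨M, hM⟩ := Nat.sInf_mem ⟨_, succ_choose_mem_sufficientDegrees hk hn⟩ H hH
    fun v => hle.trans (hm v)
  exact hPM M hM

lemma choose_le_mThr_add (hk : k ≠ 0) {t : ℕ} (ht : t ≠ 0) :
    (k * t - 1).choose (k - 1) ≤ mThr k (k * t) + ((k - 1) * t).choose (k - 1) := by
  have hkt : t ≤ k * t := Nat.le_mul_of_pos_left t (Nat.pos_of_ne_zero hk)
  obtain ⟨A, -, hA⟩ := Finset.exists_subset_card_eq
    (show t - 1 ≤ #(univ : Finset (Fin (k * t))) by rw [Finset.card_fin]; omega)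
  have hcore : #A * k < Fintype.card (Fin (k * t)) := by
    rw [hA, Fintype.card_fin, mul_comm]
    exact Nat.mul_lt_mul_of_pos_left (by omega) (Nat.pos_of_ne_zero hk)
  refine Nat.sub_le_iff_le_add.1 (lt_mThr hk (mul_ne_zero hk ht) (hyperUniform_spaceBarrier k A)
    (not_isPM_spaceBarrier hcore) fun v => Nat.sub_le_iff_le_add.2 ?_).le
  have hdeg_le := choose_le_hdeg_spaceBarrier_add hk A v
  rwa [Fintype.card_fin, hA, show k * t - (t - 1) - 1 = (k - 1) * t by
    rw [Nat.sub_one_mul]; omega] at hdeg_le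

end Threshold

section Limit

open Filter Topology

lemma atTop_inf_principal_dvd {k : ℕ} (hk : k ≠ 0) :
    atTop ⊓ 𝓟 {n : ℕ | k ∣ n} = map (k * ·) atTop := by
  ext s
  rw [mem_inf_principal, Filter.mem_map, mem_atTop_sets, mem_atTop_sets]
  refine ⟨fun ⟨N, hN⟩ => ⟨N, fun t ht => hN _ ?_ (dvd_mul_right k t)⟩,
    fun ⟨N, hN⟩ => ⟨k * N, ?_⟩⟩
  · exact ht.trans (Nat.le_mul_of_pos_left t (Nat.pos_of_ne_zero hk))
  · rintro _ hn ⟨t, rfl⟩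
    exact hN t (Nat.le_of_mul_le_mul_left hn (Nat.pos_of_ne_zero hk))

lemma tendsto_choose_div_choose {α : Type*} {l : Filter α} {u v : α → ℕ} {c : ℝ}
    (hu : Tendsto u l atTop) (hv : Tendsto v l atTop)
    (huv : Tendsto (fun t => (u t : ℝ) / v t) l (𝓝 c)) (j : ℕ) :
    Tendsto (fun t => ((u t).choose j : ℝ) / (v t).choose j) l (𝓝 (c ^ j)) := by
  have hequiv := ((isEquivalent_choose j).comp_tendsto hu).div
    ((isEquivalent_choose j).comp_tendsto hv)
  refine hequiv.symm.tendsto_nhds ((huv.pow j).congr fun t => ?_)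
  simp only [Pi.div_apply, Function.comp_apply]
  rw [div_div_div_cancel_right₀ (by positivity), div_pow]

lemma tendsto_choose_missing_div {k : ℕ} (hk : 2 ≤ k) :
    Tendsto (fun t : ℕ => (((k - 1) * t).choose (k - 1) : ℝ) / (k * t - 1).choose (k - 1)) atTop
      (𝓝 ((1 - 1 / (k : ℝ)) ^ (k - 1))) := by
  have hu : Tendsto (fun t => (k - 1) * t) atTop atTop :=
    tendsto_id.const_mul_atTop' (by omega)
  have hv : Tendsto (fun t => k * t - 1) atTop atTop :=
    (tendsto_sub_atTop_nat 1).comp (tendsto_id.const_mul_atTop' (by omega))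
  refine tendsto_choose_div_choose hu hv ?_ (k - 1)
  have hlim : Tendsto (fun t => (1 - 1 / (k : ℝ)) * (1 + 1 / (k * t - 1 : ℕ))) atTop
      (𝓝 ((1 - 1 / (k : ℝ)) * (1 + 0))) :=
    ((tendsto_one_div_atTop_nhds_zero_nat.comp hv).const_add 1).const_mul _
  rw [add_zero, mul_one] at hlim
  refine hlim.congr' ?_
  filter_upwards [hv.eventually_gt_atTop 0] with t ht
  have hkt : (k * t : ℝ) = (k * t - 1 : ℕ) + 1 := by exact_mod_cast show k * t = _ by omega
  generalize k * t - 1 = v at ht hkt ⊢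
  have hv₀ : (v : ℝ) ≠ 0 := by positivity
  calc (1 - 1 / (k : ℝ)) * (1 + 1 / v) = (1 - 1 / k) * (v + 1) / v := by field_simp
    _ = (k - 1) * t / v := by rw [← hkt]; field_simp
    _ = ((k - 1) * t : ℕ) / v := by rw [Nat.cast_mul, Nat.cast_pred (by omega)]

lemma spaceBarrierDensity_le_fThr {k : ℕ} (hk : 2 ≤ k) : spaceBarrierDensity k ≤ fThr k := by
  have hk₀ : k ≠ 0 := by omega
  have hchoose {t : ℕ} (ht : t ≠ 0) : 1 ≤ (k * t - 1).choose (k - 1) :=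
    Nat.choose_pos (Nat.sub_le_sub_right (Nat.le_mul_of_pos_right k (Nat.pos_of_ne_zero ht)) 1)
  have hlim := (tendsto_choose_missing_div hk).const_sub 1
  rw [fThr, atTop_inf_principal_dvd hk₀, ← limsup_comp]
  refine hlim.limsup_eq.symm.trans_le (limsup_le_limsup ?_ hlim.isCoboundedUnder_le
    (isBoundedUnder_of_eventually_le (a := 2) ?_))
  · filter_upwards [eventually_ne_atTop 0] with t ht
    have hpos : (0 : ℝ) < (k * t - 1).choose (k - 1) := by exact_mod_cast hchoose ht
    rw [Function.comp_apply, sub_le_iff_le_add, ← add_div, one_le_div hpos]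
    exact_mod_cast choose_le_mThr_add hk₀ ht
  · filter_upwards [eventually_ne_atTop 0] with t ht
    have hone : (1 : ℝ) ≤ (k * t - 1).choose (k - 1) := by exact_mod_cast hchoose ht
    have hle : (mThr k (k * t) : ℝ) ≤ (k * t - 1).choose (k - 1) + 1 := by
      exact_mod_cast mThr_le hk₀ (mul_ne_zero hk₀ ht)
    rw [Function.comp_apply, div_le_iff₀ (by linarith)]
    linarith

end Limit

theorem f_gt_g (k r : ℕ)
    (h : (r = 2 ∧ 17 ≤ k) ∨ (r = 3 ∧ 5 ≤ k) ∨ (r = 4 ∧ 4 ≤ k) ∨ (5 ≤ r ∧ 3 ≤ k)) :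
    gThr k r < fThr k := by
  have hk : 3 ≤ k := by omega
  obtain ⟨B, hB, hpos⟩ := exists_gfun_le_lt_spaceBarrierDensity (k := k) (r := r) hk (by omega)
  have hhalf : 1 / 2 < spaceBarrierDensity k := by
    linarith [five_div_nine_le_spaceBarrierDensity hk]
  calc gThr k r
      ≤ max (max (1 / 2) ((1 - (1 - 1 / (r : ℝ)) / k) ^ (k - 1))) B :=
        gThr_le (by omega) (by omega) hpos
    _ < spaceBarrierDensity k :=
        max_lt (max_lt hhalf (lastCell_bound_lt_spaceBarrierDensity h)) hB
    _ ≤ fThr k := spaceBarrierDensity_le_fThr (by omega)
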